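/- Let X and Y be pospaces and f : X → Y a dihomeomorphism. Then for every n ≥ 1, the natural homology functors H⃗_n(X;ℤ) : tpos(X) → Ab and H⃗_n(Y;ℤ) : tpos(Y) → Ab are bisimulation equivalent: the set of triples (⟨p⟩, H_{n−1}(f_*), ⟨f ∘ p⟩), where ⟨p⟩ ranges over all traces of X and H_{n−1}(f_*) is the isomorphism induced in homology by the homeomorphism of trace spaces q ↦ f ∘ q, is a bisimulation between them. -/

import Mathlib

open CategoryTheory

noncomputable section

/-- A reparametrization of the unit interval: continuous, monotone, fixing the endpoints. -/
def IsReparam (φ : unitInterval → unitInterval) : Prop :=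
  Continuous φ ∧ Monotone φ ∧ φ 0 = 0 ∧ φ 1 = 1

/-- Reparametrization equivalence of paths. -/
def ReparamEquiv {X : Type*} (f g : unitInterval → X) : Prop :=
  ∃ φ ψ : unitInterval → unitInterval, IsReparam φ ∧ IsReparam ψ ∧ f ∘ φ = g ∘ ψ

/-- A dipath in a pospace: a continuous monotone map `[0,1] → X`. -/
def IsDipath {X : Type*} [TopologicalSpace X] [Preorder X] (p : unitInterval → X) : Prop :=
  Continuous p ∧ Monotone p

/-- Concatenation of paths: `f` (rescaled) on `[0,1/2]`, `g` (rescaled) on `[1/2,1]`. -/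
def concatFun {X : Type*} (f g : unitInterval → X) : unitInterval → X :=
  fun t => if (t : ℝ) ≤ 1 / 2 then f (Set.projIcc 0 1 zero_le_one (2 * (t : ℝ)))
    else g (Set.projIcc 0 1 zero_le_one (2 * (t : ℝ) - 1))

/-- Traces: paths up to reparametrization equivalence. -/
def Trace (X : Type*) : Type _ := Quot (ReparamEquiv (X := X))

/-- The trace of a path. -/
def trc {X : Type*} (f : unitInterval → X) : Trace X := Quot.mk _ f

/-- The order on traces of a pospace: `⟨f⟩ ≤ ⟨g⟩` iff `⟨g⟩ = ⟨u⟩ ⋆ ⟨f⟩ ⋆ ⟨v⟩` for dipaths `u,v`. -/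
def TraceLE {X : Type*} [TopologicalSpace X] [PartialOrder X] (a b : Trace X) : Prop :=
  ∃ f u v : unitInterval → X,
    IsDipath f ∧ IsDipath u ∧ IsDipath v ∧
    u 1 = f 0 ∧ f 1 = v 0 ∧
    a = trc f ∧ b = trc (concatFun (concatFun u f) v)

/-- Traces of directed paths. -/
def IsDiTrace {X : Type*} [TopologicalSpace X] [PartialOrder X] (a : Trace X) : Prop :=
  ∃ f, IsDipath f ∧ a = trc f

/-- The trace poset `tpos(X)` of a pospace: traces of directed paths, ordered by extension. -/
def TPos (X : Type*) [TopologicalSpace X] [PartialOrder X] : Type _ :=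
  {a : Trace X // IsDiTrace a}

/-- The order of the trace poset. -/
def TPosLE {X : Type*} [TopologicalSpace X] [PartialOrder X] (a b : TPos X) : Prop :=
  TraceLE a.1 b.1

/-- Initial point of a trace. -/
def Trace.src {X : Type*} (a : Trace X) : X :=
  Quot.lift (fun f => f 0)
    (fun f g h => by
      obtain ⟨φ, ψ, hφ, hψ, hfg⟩ := h
      have h0 : f (φ 0) = g (ψ 0) := congrFun hfg 0
      rwa [hφ.2.2.1, hψ.2.2.1] at h0) a

/-- Terminal point of a trace. -/
def Trace.tgt {X : Type*} (a : Trace X) : X :=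
  Quot.lift (fun f => f 1)
    (fun f g h => by
      obtain ⟨φ, ψ, hφ, hψ, hfg⟩ := h
      have h1 : f (φ 1) = g (ψ 1) := congrFun hfg 1
      rwa [hφ.2.2.2, hψ.2.2.2] at h1) a

/-- The space of dipaths from `x` to `y`, with the compact-open topology. -/
abbrev DipathSpace (X : Type) [TopologicalSpace X] [Preorder X] (x y : X) : Type :=
  {p : C(unitInterval, X) // Monotone p ∧ p 0 = x ∧ p 1 = y}

/-- The trace space from `x` to `y`: dipaths modulo reparametrization, quotient topology. -/
abbrev TraceSpace (X : Type) [TopologicalSpace X] [Preorder X] (x y : X) : Type :=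
  Quot (fun p q : DipathSpace X x y => ReparamEquiv (p.1 : unitInterval → X) q.1)

/-- The `m`-th singular homology functor with coefficients in `R`. -/
def SingularH (R : Type) [CommRing R] (m : ℕ) : TopCat.{0} ⥤ ModuleCat.{0} R :=
  TopCat.toSSet ⋙ ((SimplicialObject.whiskering _ _).obj (ModuleCat.free R)) ⋙
    AlgebraicTopology.alternatingFaceMapComplex _ ⋙ HomologicalComplex.homologyFunctor _ _ m

/-- The object part of the natural homology diagram `H⃗_n(X;k)`:
the `(n-1)`-st singular homology of the trace space between the endpoints of a trace. -/
def Hobj (k : Type) [CommRing k] (m : ℕ) (X : Type) [TopologicalSpace X] [PartialOrder X]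
    (a : TPos X) : ModuleCat k :=
  (SingularH k m).obj (TopCat.of (TraceSpace X a.1.src a.1.tgt))

/-- Pushforward of traces along a map `e : X → Y`. -/
def Trace.push {X Y : Type} (e : X → Y) : Trace X → Trace Y :=
  Quot.map (fun p => e ∘ p) (fun f g h => by
    obtain ⟨φ, ψ, hφ, hψ, hfg⟩ := h
    exact ⟨φ, ψ, hφ, hψ, funext fun t => congrArg e (congrFun hfg t)⟩)

/-- Pushforward of dipath traces along a dihomeomorphism. -/
def TPos.push {X Y : Type} [TopologicalSpace X] [PartialOrder X]
    [TopologicalSpace Y] [PartialOrder Y]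
    (e : X ≃ₜ Y) (he : Monotone e) (a : TPos X) : TPos Y :=
  ⟨Trace.push e a.1, by
    obtain ⟨f, hf, hfa⟩ := a.2
    exact ⟨(e : X → Y) ∘ f, ⟨e.continuous.comp hf.1, he.comp hf.2⟩, by rw [hfa]; rfl⟩⟩

/-- A bisimulation between two (poset-indexed) diagrams of abelian groups (`ℤ`-modules),
following the definition for `Ab`-valued functors on small categories: a set of triples
`(a, η, b)` with `η : F a ≅ G b`, covering all objects on both sides, and such that morphisms
on either side can be matched by morphisms on the other, compatibly with the `η`'s. -/
def IsBisimRel {A B : Type*} (rA : A → A → Prop) (rB : B → B → Prop)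
    (FO : A → ModuleCat ℤ) (Fm : ∀ a a', rA a a' → (FO a ⟶ FO a'))
    (GO : B → ModuleCat ℤ) (Gm : ∀ b b', rB b b' → (GO b ⟶ GO b'))
    (R : Set (Σ a : A, Σ b : B, FO a ≅ GO b)) : Prop :=
  (∀ a : A, ∃ t ∈ R, t.1 = a) ∧
  (∀ b : B, ∃ t ∈ R, t.2.1 = b) ∧
  (∀ t ∈ R, ∀ (a' : A) (h : rA t.1 a'), ∃ t' ∈ R, ∃ (ha : t'.1 = a') (h' : rB t.2.1 t'.2.1),
    Fm t.1 a' h ≫ eqToHom (congrArg FO ha.symm) ≫ t'.2.2.hom = t.2.2.hom ≫ Gm _ _ h') ∧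
  (∀ t ∈ R, ∀ (b' : B) (h : rB t.2.1 b'), ∃ t' ∈ R, ∃ (hb : t'.2.1 = b') (h' : rA t.1 t'.1),
    Fm t.1 t'.1 h' ≫ t'.2.2.hom = t.2.2.hom ≫ Gm t.2.1 b' h ≫ eqToHom (congrArg GO hb.symm))

/-!
Up to reparametrization, a dipath of a pospace is determined by its image: if the values of the
dipaths `f` and `g` are pairwise comparable and their endpoints agree, then on each antidiagonal
`s + t = τ` of the square there is a first point with `g t ≤ f s`, where equality holds by
continuity; its coordinates `s` and `t = τ - s` are nondecreasing in `τ`, hence continuous, and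
reparametrize `f` and `g` to the same path.

If `⟨g⟩ = ⟨u⟩ ⋆ ⟨f⟩ ⋆ ⟨v⟩`, the image of `u` is the part of the image of `g` lying below the source
of `f`, and dually for `v`.  So the traces of `u` and `v` depend only on `⟨f⟩ ≤ ⟨g⟩`, and extending
by them is a map of trace spaces that commutes with postcomposition by any continuous monotone map.
Applying a functor of topological spaces turns these commuting squares into the bisimulation
conditions along the order isomorphism of trace posets.
-/

section Reparametrization

variable {X : Type*}

theorem IsReparam.surjective {φ : unitInterval → unitInterval} (h : IsReparam φ) :
    Function.Surjective φ := by
  intro y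
  have hIcc := intermediate_value_univ (0 : unitInterval) 1 h.1
  rw [h.2.2.1, h.2.2.2] at hIcc
  exact hIcc ⟨unitInterval.nonneg', unitInterval.le_one'⟩

theorem isReparam_id : IsReparam id := ⟨continuous_id, monotone_id, rfl, rfl⟩

theorem ReparamEquiv.refl (f : unitInterval → X) : ReparamEquiv f f :=
  ⟨id, id, isReparam_id, isReparam_id, rfl⟩

theorem ReparamEquiv.range_eq {f g : unitInterval → X} (h : ReparamEquiv f g) :
    Set.range f = Set.range g := by
  obtain ⟨φ, ψ, hφ, hψ, hfg⟩ := h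
  rw [← hφ.surjective.range_comp f, ← hψ.surjective.range_comp g, hfg]

theorem isReparam_projIcc_comp {h : ℝ → ℝ} (hc : Continuous h) (hm : Monotone h)
    (h0 : h 0 ≤ 0) (h1 : 1 ≤ h 1) :
    IsReparam fun r => Set.projIcc 0 1 zero_le_one (h r) :=
  ⟨continuous_projIcc.comp (hc.comp continuous_subtype_val),
    (Set.monotone_projIcc _).comp (hm.comp (Subtype.mono_coe _)),
    Set.projIcc_of_le_left _ h0, Set.projIcc_of_right_le _ h1⟩

end Reparametrization

section CrossingTime

variable {X : Type*} [Preorder X] {f g : unitInterval → X} {s τ τ' : ℝ}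

/-- The times `s` such that, on the antidiagonal of points `(s, τ - s)`, the path `g` at time
`τ - s` is below the path `f` at time `s`.  Both paths are extended to constants outside `[0,1]`;
the bounds on `s` put `s ≥ 0` and `τ - s ≤ 1`, so that the infimum is meaningful. -/
def crossingSet (f g : unitInterval → X) (τ : ℝ) : Set ℝ :=
  {s | 0 ≤ s ∧ τ - 1 ≤ s ∧ Set.IccExtend zero_le_one g (τ - s) ≤ Set.IccExtend zero_le_one f s}

/-- The first time at which `f` catches up with `g` along the antidiagonal of sum `τ`; it is used
to reparametrize comparable dipaths to a common one. -/
def crossingTime (f g : unitInterval → X) (τ : ℝ) : ℝ :=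
  sInf (crossingSet f g τ)

theorem bddBelow_crossingSet (f g : unitInterval → X) (τ : ℝ) : BddBelow (crossingSet f g τ) :=
  ⟨0, fun _ hs => hs.1⟩

theorem mem_crossingSet_of_le (hf : Monotone f) (h0 : g 0 ≤ f 0) (hs : 0 ≤ s) (hτ : τ ≤ s) :
    s ∈ crossingSet f g τ := by
  refine ⟨hs, by linarith, ?_⟩
  rw [Set.IccExtend_of_le_left _ _ (sub_nonpos.2 hτ)]
  exact h0.trans (hf unitInterval.nonneg')

theorem mem_crossingSet_of_one_le (hg : Monotone g) (h1 : g 1 ≤ f 1) (hs : 1 ≤ s)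
    (hτ : τ - 1 ≤ s) : s ∈ crossingSet f g τ := by
  refine ⟨zero_le_one.trans hs, hτ, ?_⟩
  rw [Set.IccExtend_of_right_le _ f hs]
  exact (hg unitInterval.le_one').trans h1

theorem nonempty_crossingSet (hf : Monotone f) (h0 : g 0 ≤ f 0) (τ : ℝ) :
    (crossingSet f g τ).Nonempty :=
  ⟨max 0 τ, mem_crossingSet_of_le hf h0 (le_max_left _ _) (le_max_right _ _)⟩

theorem le_crossingTime (hf : Monotone f) (h0 : g 0 ≤ f 0) (τ : ℝ) :
    max 0 (τ - 1) ≤ crossingTime f g τ :=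
  le_csInf (nonempty_crossingSet hf h0 τ) fun _ hs => max_le hs.1 hs.2.1

theorem monotone_crossingTime (hf : Monotone f) (hg : Monotone g) (h0 : g 0 ≤ f 0) :
    Monotone (crossingTime f g) := fun τ τ' hτ =>
  csInf_le_csInf (bddBelow_crossingSet f g τ) (nonempty_crossingSet hf h0 τ')
    fun s ⟨hs, hs', hle⟩ =>
      ⟨hs, by linarith, (hg.IccExtend _ (sub_le_sub_right hτ s)).trans hle⟩

theorem crossingTime_le_add_sub (hf : Monotone f) (h0 : g 0 ≤ f 0) (hτ : τ ≤ τ') :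
    crossingTime f g τ' ≤ crossingTime f g τ + (τ' - τ) := by
  rw [← sub_le_iff_le_add]
  refine le_csInf (nonempty_crossingSet hf h0 τ) fun s ⟨hs, hs', hle⟩ => ?_
  rw [sub_le_iff_le_add]
  refine csInf_le (bddBelow_crossingSet f g τ') ⟨by linarith, by linarith, ?_⟩
  rw [show τ' - (s + (τ' - τ)) = τ - s by ring]
  exact hle.trans (hf.IccExtend _ (by linarith))

theorem lipschitzWith_crossingTime (hf : Monotone f) (hg : Monotone g) (h0 : g 0 ≤ f 0) :
    LipschitzWith 1 (crossingTime f g) := by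
  refine LipschitzWith.of_le_add fun τ τ' => ?_
  rw [Real.dist_eq]
  rcases le_total τ τ' with hτ | hτ
  · exact (monotone_crossingTime hf hg h0 hτ).trans (le_add_of_nonneg_right (abs_nonneg _))
  · exact (crossingTime_le_add_sub hf h0 hτ).trans (by gcongr; exact le_abs_self _)

variable [TopologicalSpace X] [OrderClosedTopology X]

theorem isClosed_crossingSet (hf : Continuous f) (hg : Continuous g) (τ : ℝ) :
    IsClosed (crossingSet f g τ) :=
  isClosed_Ici.inter <| isClosed_Ici.inter <|
    isClosed_le (hg.Icc_extend'.comp (continuous_sub_left τ)) hf.Icc_extend'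

end CrossingTime

section ReparamEquiv

variable {X : Type*} [TopologicalSpace X] [PartialOrder X] [OrderClosedTopology X]
  {f g : unitInterval → X}

theorem IccExtend_crossingTime_eq (hf : IsDipath f) (hg : IsDipath g) (h0 : f 0 = g 0)
    (h1 : f 1 = g 1) (hfg : ∀ s t, f s ≤ g t ∨ g t ≤ f s) (τ : ℝ) :
    Set.IccExtend zero_le_one f (crossingTime f g τ) =
      Set.IccExtend zero_le_one g (τ - crossingTime f g τ) := by
  have hmem : crossingTime f g τ ∈ crossingSet f g τ :=
    (isClosed_crossingSet hf.1 hg.1 τ).csInf_mem (nonempty_crossingSet hf.2 h0.ge τ)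
      (bddBelow_crossingSet f g τ)
  refine le_antisymm ?_ hmem.2.2
  rcases (le_crossingTime hf.2 h0.ge τ).eq_or_lt with hmin | hlt
  · rw [← hmin]
    rcases max_choice 0 (τ - 1) with hmax | hmax <;> rw [hmax]
    · rw [Set.IccExtend_left]
      exact h0.le.trans (hg.2 unitInterval.nonneg')
    · rw [sub_sub_cancel, Set.IccExtend_right]
      exact (hf.2 unitInterval.le_one').trans h1.le
  · have hbefore : ∀ s ∈ Set.Ico (max 0 (τ - 1)) (crossingTime f g τ),
        Set.IccExtend zero_le_one f s ≤ Set.IccExtend zero_le_one g (τ - s) := fun s hs =>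
      (hfg _ _).resolve_right fun hle => notMem_of_lt_csInf hs.2 (bddBelow_crossingSet f g τ)
        ⟨(le_max_left _ _).trans hs.1, (le_max_right _ _).trans hs.1, hle⟩
    refine le_on_closure hbefore hf.1.Icc_extend'.continuousOn
      (hg.1.Icc_extend'.comp (continuous_sub_left τ)).continuousOn ?_
    rw [closure_Ico hlt.ne]
    exact Set.right_mem_Icc.2 hlt.le

theorem reparamEquiv_of_comparable (hf : IsDipath f) (hg : IsDipath g) (h0 : f 0 = g 0)
    (h1 : f 1 = g 1) (hfg : ∀ s t, f s ≤ g t ∨ g t ≤ f s) : ReparamEquiv f g := by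
  set α := crossingTime f g
  have hα : Continuous α := (lipschitzWith_crossingTime hf.2 hg.2 h0.ge).continuous
  have hα0 : α 0 ≤ 0 := csInf_le (bddBelow_crossingSet f g 0)
    (mem_crossingSet_of_le hf.2 h0.ge le_rfl le_rfl)
  have hα0' : 0 ≤ α 0 := (le_max_left _ _).trans (le_crossingTime hf.2 h0.ge 0)
  have hα2 : α 2 ≤ 1 := csInf_le (bddBelow_crossingSet f g 2)
    (mem_crossingSet_of_one_le hg.2 h1.ge le_rfl (by norm_num))
  have hα2' : 2 - 1 ≤ α 2 := (le_max_right _ _).trans (le_crossingTime hf.2 h0.ge 2)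
  refine ⟨_, _,
    isReparam_projIcc_comp (h := fun r => α (2 * r)) (by fun_prop) (fun r r' hr => ?_)
      (by simpa using hα0) (by norm_num at hα2' ⊢; exact hα2'),
    isReparam_projIcc_comp (h := fun r => 2 * r - α (2 * r)) (by fun_prop) (fun r r' hr => ?_)
      (by simpa using hα0') (by norm_num; linarith),
    funext fun r => IccExtend_crossingTime_eq hf hg h0 h1 hfg (2 * r)⟩
  · exact monotone_crossingTime hf.2 hg.2 h0.ge (by linarith)
  · have hle := crossingTime_le_add_sub hf.2 h0.ge (show 2 * r ≤ 2 * r' by linarith)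
    change 2 * r - crossingTime f g (2 * r) ≤ 2 * r' - crossingTime f g (2 * r')
    linarith

theorem IsDipath.reparamEquiv_of_range_eq (hf : IsDipath f) (hg : IsDipath g)
    (h : Set.range f = Set.range g) : ReparamEquiv f g := by
  have hgf : ∀ t, ∃ s, f s = g t := fun t => h.ge (Set.mem_range_self t)
  have hfg : ∀ s, ∃ t, g t = f s := fun s => h.le (Set.mem_range_self s)
  refine reparamEquiv_of_comparable hf hg (le_antisymm ?_ ?_) (le_antisymm ?_ ?_) fun s t => ?_
  · obtain ⟨s, hs⟩ := hgf 0
    exact hs ▸ hf.2 unitInterval.nonneg'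
  · obtain ⟨t, ht⟩ := hfg 0
    exact ht ▸ hg.2 unitInterval.nonneg'
  · obtain ⟨t, ht⟩ := hfg 1
    exact ht ▸ hg.2 unitInterval.le_one'
  · obtain ⟨s, hs⟩ := hgf 1
    exact hs ▸ hf.2 unitInterval.le_one'
  · obtain ⟨r, hr⟩ := hgf t
    exact hr ▸ (le_total s r).imp (hf.2 ·) (hf.2 ·)

end ReparamEquiv

section Concatenation

variable {X : Type*}

theorem concatFun_zero (f g : unitInterval → X) : concatFun f g 0 = f 0 := by
  simp [concatFun]

theorem concatFun_one (f g : unitInterval → X) : concatFun f g 1 = g 1 := by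
  have hhalf : ¬ ((1 : ℝ) ≤ 1 / 2) := by norm_num
  have hend : (2 : ℝ) * 1 - 1 = 1 := by norm_num
  simp only [concatFun, Set.Icc.coe_one, if_neg hhalf, hend, Set.projIcc_right]
  rfl

theorem comp_concatFun {Y : Type*} (e : X → Y) (f g : unitInterval → X) :
    e ∘ concatFun f g = concatFun (e ∘ f) (e ∘ g) :=
  funext fun _ => apply_ite e _ _ _

theorem range_concatFun {f g : unitInterval → X} (h : f 1 = g 0) :
    Set.range (concatFun f g) = Set.range f ∪ Set.range g := by
  refine Set.Subset.antisymm ?_ (Set.union_subset ?_ ?_)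
  · rintro _ ⟨t, rfl⟩
    unfold concatFun
    split_ifs
    · exact Or.inl ⟨_, rfl⟩
    · exact Or.inr ⟨_, rfl⟩
  · rintro _ ⟨r, rfl⟩
    have hle : (r : ℝ) / 2 ≤ 1 / 2 := by linarith [r.2.2]
    refine ⟨⟨r / 2, by linarith [r.2.1], by linarith⟩, ?_⟩
    simp only [concatFun, if_pos hle, mul_div_cancel₀ (r : ℝ) two_ne_zero, Set.projIcc_val]
  · rintro _ ⟨r, rfl⟩
    rcases r.2.1.eq_or_lt with hr | hr
    · obtain rfl : r = 0 := Subtype.ext hr.symm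
      refine ⟨⟨1 / 2, by norm_num, by norm_num⟩, ?_⟩
      rw [← h]
      simp only [concatFun, le_refl, if_true, mul_one_div_cancel (two_ne_zero (α := ℝ)),
        Set.projIcc_right]
      rfl
    · have hlt : ¬ ((r : ℝ) + 1) / 2 ≤ 1 / 2 := by linarith
      refine ⟨⟨(r + 1) / 2, by linarith, by linarith [r.2.2]⟩, ?_⟩
      simp only [concatFun, if_neg hlt, mul_div_cancel₀ ((r : ℝ) + 1) two_ne_zero,
        add_sub_cancel_right, Set.projIcc_val]

theorem range_concatFun_concatFun {u f v : unitInterval → X} (huf : u 1 = f 0) (hfv : f 1 = v 0) :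
    Set.range (concatFun (concatFun u f) v) = Set.range u ∪ Set.range f ∪ Set.range v := by
  rw [range_concatFun (by rw [concatFun_one, hfv]), range_concatFun huf]

theorem IsDipath.comp {Y : Type*} [TopologicalSpace X] [Preorder X] [TopologicalSpace Y]
    [Preorder Y] {e : X → Y} {f : unitInterval → X} (hf : IsDipath f) (hc : Continuous e)
    (hm : Monotone e) : IsDipath (e ∘ f) :=
  ⟨hc.comp hf.1, hm.comp hf.2⟩

theorem IsDipath.concatFun [TopologicalSpace X] [Preorder X] {f g : unitInterval → X}
    (hf : IsDipath f) (hg : IsDipath g) (h : f 1 = g 0) : IsDipath (concatFun f g) := by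
  constructor
  · refine Continuous.if_le ?_ ?_ continuous_subtype_val continuous_const fun t ht => ?_
    · exact hf.1.comp (continuous_projIcc.comp (by fun_prop))
    · exact hg.1.comp (continuous_projIcc.comp (by fun_prop))
    · rw [ht, mul_one_div_cancel two_ne_zero, sub_self, Set.projIcc_right, Set.projIcc_left]
      exact h
  · intro s t hst
    have hst' : (s : ℝ) ≤ t := hst
    unfold _root_.concatFun
    split_ifs with hs ht ht
    · exact hf.2 (Set.monotone_projIcc _ (by linarith))
    · exact (hf.2 unitInterval.le_one').trans (h.le.trans (hg.2 unitInterval.nonneg'))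
    · linarith
    · exact hg.2 (Set.monotone_projIcc _ (by linarith))

theorem IsDipath.concatFun_concatFun [TopologicalSpace X] [Preorder X]
    {u f v : unitInterval → X} (hu : IsDipath u) (hf : IsDipath f) (hv : IsDipath v)
    (huf : u 1 = f 0) (hfv : f 1 = v 0) :
    IsDipath (_root_.concatFun (_root_.concatFun u f) v) :=
  (hu.concatFun hf huf).concatFun hv (by rw [concatFun_one, hfv])

variable [PartialOrder X] {u f v : unitInterval → X}

theorem range_concatFun_concatFun_inter_Iic (hu : Monotone u) (hf : Monotone f) (hv : Monotone v)
    (huf : u 1 = f 0) (hfv : f 1 = v 0) :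
    Set.range (concatFun (concatFun u f) v) ∩ Set.Iic (f 0) = Set.range u := by
  have hf0 : ∀ t, f 0 ≤ f t := fun t => hf unitInterval.nonneg'
  have hv0 : ∀ t, f 0 ≤ v t := fun t => ((hf0 1).trans_eq hfv).trans (hv unitInterval.nonneg')
  rw [range_concatFun_concatFun huf hfv]
  refine Set.Subset.antisymm ?_ ?_
  · rintro _ ⟨(⟨t, rfl⟩ | ⟨t, rfl⟩) | ⟨t, rfl⟩, hle⟩
    · exact ⟨t, rfl⟩
    · exact ⟨1, huf.trans (le_antisymm (hf0 t) hle)⟩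
    · exact ⟨1, huf.trans (le_antisymm (hv0 t) hle)⟩
  · rintro _ ⟨t, rfl⟩
    exact ⟨Or.inl (Or.inl ⟨t, rfl⟩), (hu unitInterval.le_one').trans_eq huf⟩

theorem range_concatFun_concatFun_inter_Ici (hu : Monotone u) (hf : Monotone f) (hv : Monotone v)
    (huf : u 1 = f 0) (hfv : f 1 = v 0) :
    Set.range (concatFun (concatFun u f) v) ∩ Set.Ici (f 1) = Set.range v := by
  have hf1 : ∀ t, f t ≤ f 1 := fun t => hf unitInterval.le_one'
  have hu1 : ∀ t, u t ≤ f 1 := fun t => ((hu unitInterval.le_one').trans_eq huf).trans (hf1 0)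
  rw [range_concatFun_concatFun huf hfv]
  refine Set.Subset.antisymm ?_ ?_
  · rintro _ ⟨(⟨t, rfl⟩ | ⟨t, rfl⟩) | ⟨t, rfl⟩, hle⟩
    · exact ⟨0, hfv.symm.trans (le_antisymm hle (hu1 t))⟩
    · exact ⟨0, hfv.symm.trans (le_antisymm hle (hf1 t))⟩
    · exact ⟨t, rfl⟩
  · rintro _ ⟨t, rfl⟩
    exact ⟨Or.inr ⟨t, rfl⟩, hfv.trans_le (hv unitInterval.nonneg')⟩

end Concatenation

section Extension

variable {X : Type*} [TopologicalSpace X] [Preorder X] {a b : Trace X} {u v : unitInterval → X}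

/-- The paths `u` and `v` extend the trace `a` to the trace `b = ⟨u⟩ ⋆ a ⋆ ⟨v⟩`; the order of the
trace poset asks for such `u` and `v` that are dipaths. -/
def IsExtension (u v : unitInterval → X) (a b : Trace X) : Prop :=
  ∃ f : unitInterval → X, IsDipath f ∧ u 1 = f 0 ∧ f 1 = v 0 ∧
    a = trc f ∧ b = trc (concatFun (concatFun u f) v)

theorem IsExtension.apply_one_left (h : IsExtension u v a b) : u 1 = a.src := by
  obtain ⟨f, -, huf, -, rfl, -⟩ := h
  exact huf

theorem IsExtension.apply_zero_right (h : IsExtension u v a b) : v 0 = a.tgt := by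
  obtain ⟨f, -, -, hfv, rfl, -⟩ := h
  exact hfv.symm

theorem IsExtension.apply_zero_left (h : IsExtension u v a b) : u 0 = b.src := by
  obtain ⟨f, -, -, -, -, rfl⟩ := h
  exact ((concatFun_zero _ _).trans (concatFun_zero _ _)).symm

theorem IsExtension.apply_one_right (h : IsExtension u v a b) : v 1 = b.tgt := by
  obtain ⟨f, -, -, -, -, rfl⟩ := h
  exact (concatFun_one _ _).symm

theorem IsExtension.isDipath_concatFun (h : IsExtension u v a b) (hu : IsDipath u)
    (hv : IsDipath v) {p : unitInterval → X} (hp : IsDipath p) (hp0 : p 0 = a.src)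
    (hp1 : p 1 = a.tgt) : IsDipath (concatFun (concatFun u p) v) :=
  hu.concatFun_concatFun hp hv (h.apply_one_left.trans hp0.symm)
    (hp1.trans h.apply_zero_right.symm)

end Extension

section ExtensionUniqueness

/-- The image of a trace, i.e. the common range of its representatives. -/
def Trace.range {X : Type*} : Trace X → Set X :=
  Quot.lift Set.range fun _ _ => ReparamEquiv.range_eq

variable {X : Type*} [TopologicalSpace X] [PartialOrder X] {a b : Trace X}
  {u v u' v' : unitInterval → X}

theorem IsExtension.range_left (h : IsExtension u v a b) (hu : Monotone u) (hv : Monotone v) :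
    Set.range u = b.range ∩ Set.Iic a.src := by
  obtain ⟨f, hf, huf, hfv, rfl, rfl⟩ := h
  exact (range_concatFun_concatFun_inter_Iic hu hf.2 hv huf hfv).symm

theorem IsExtension.range_right (h : IsExtension u v a b) (hu : Monotone u) (hv : Monotone v) :
    Set.range v = b.range ∩ Set.Ici a.tgt := by
  obtain ⟨f, hf, huf, hfv, rfl, rfl⟩ := h
  exact (range_concatFun_concatFun_inter_Ici hu hf.2 hv huf hfv).symm

theorem IsExtension.reparamEquiv_concatFun [OrderClosedTopology X] (h : IsExtension u v a b)
    (h' : IsExtension u' v' a b) (hu : IsDipath u) (hv : IsDipath v) (hu' : IsDipath u')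
    (hv' : IsDipath v') {p : unitInterval → X} (hp : IsDipath p) (hp0 : p 0 = a.src)
    (hp1 : p 1 = a.tgt) :
    ReparamEquiv (concatFun (concatFun u p) v) (concatFun (concatFun u' p) v') := by
  refine (h.isDipath_concatFun hu hv hp hp0 hp1).reparamEquiv_of_range_eq
    (h'.isDipath_concatFun hu' hv' hp hp0 hp1) ?_
  rw [range_concatFun_concatFun (h.apply_one_left.trans hp0.symm)
      (hp1.trans h.apply_zero_right.symm),
    range_concatFun_concatFun (h'.apply_one_left.trans hp0.symm)
      (hp1.trans h'.apply_zero_right.symm),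
    h.range_left hu.2 hv.2, h'.range_left hu'.2 hv'.2,
    h.range_right hu.2 hv.2, h'.range_right hu'.2 hv'.2]

end ExtensionUniqueness

section Push

variable {X Y : Type}

theorem Trace.src_push (e : X → Y) (a : Trace X) : (a.push e).src = e a.src := by
  induction a using Quot.ind; rfl

theorem Trace.tgt_push (e : X → Y) (a : Trace X) : (a.push e).tgt = e a.tgt := by
  induction a using Quot.ind; rfl

theorem Trace.push_leftInverse {e : X → Y} {d : Y → X} (h : Function.LeftInverse d e) :
    Function.LeftInverse (Trace.push d) (Trace.push e) := by
  rintro ⟨f⟩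
  exact congrArg trc (funext fun t => h (f t))

theorem IsExtension.push [TopologicalSpace X] [Preorder X] [TopologicalSpace Y]
    [Preorder Y] {a b : Trace X} {u v : unitInterval → X} (h : IsExtension u v a b)
    {e : X → Y} (hc : Continuous e) (hm : Monotone e) :
    IsExtension (e ∘ u) (e ∘ v) (a.push e) (b.push e) := by
  obtain ⟨f, hf, huf, hfv, rfl, rfl⟩ := h
  refine ⟨e ∘ f, hf.comp hc hm, congrArg e huf, congrArg e hfv, rfl, ?_⟩
  rw [← comp_concatFun, ← comp_concatFun]
  rfl

variable [TopologicalSpace X] [PartialOrder X] [TopologicalSpace Y] [PartialOrder Y]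

theorem TraceLE.push {a b : Trace X} (h : TraceLE a b) {e : X → Y} (hc : Continuous e)
    (hm : Monotone e) : TraceLE (a.push e) (b.push e) := by
  obtain ⟨f, u, v, hf, hu, hv, hext⟩ := h
  obtain ⟨f', hf', hext'⟩ := IsExtension.push ⟨f, hf, hext⟩ hc hm
  exact ⟨f', e ∘ u, e ∘ v, hf', hu.comp hc hm, hv.comp hc hm, hext'⟩

theorem TPosLE.push {a b : TPos X} (h : TPosLE a b) (e : X ≃ₜ Y) (he : Monotone e) :
    TPosLE (TPos.push e he a) (TPos.push e he b) :=
  TraceLE.push h e.continuous he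

theorem TPos.push_leftInverse (e : X ≃ₜ Y) (he : Monotone e) (he' : Monotone e.symm) :
    Function.LeftInverse (TPos.push e.symm he') (TPos.push e he) := fun a =>
  Subtype.ext (Trace.push_leftInverse e.left_inv a.1)

theorem TPos.push_surjective (e : X ≃ₜ Y) (he : Monotone e) (he' : Monotone e.symm) :
    Function.Surjective (TPos.push e he) :=
  (TPos.push_leftInverse e.symm he' he).surjective

theorem tposLE_push_iff (e : X ≃ₜ Y) (he : Monotone e) (he' : Monotone e.symm) (a b : TPos X) :
    TPosLE (TPos.push e he a) (TPos.push e he b) ↔ TPosLE a b := by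
  refine ⟨fun h => ?_, fun h => h.push e he⟩
  have hback := h.push e.symm he'
  rwa [TPos.push_leftInverse e he he' a, TPos.push_leftInverse e he he' b] at hback

end Push

section TraceSpace

/-- The map of trace spaces `g` is `p ↦ ⟨u⟩ ⋆ p ⋆ ⟨v⟩`.  It is specified on representatives, since
the endpoints of the concatenation match those of the target only propositionally. -/
def IsConcatMap {X : Type} [TopologicalSpace X] [Preorder X] {x y x' y' : X}
    (u v : unitInterval → X) (g : TraceSpace X x y → TraceSpace X x' y') : Prop :=
  ∀ (p : DipathSpace X x y) (q : DipathSpace X x' y'),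
    ReparamEquiv (q.1 : unitInterval → X) (concatFun (concatFun u (p.1 : unitInterval → X)) v) →
      g (Quot.mk _ p) = Quot.mk _ q

/-- The map of trace spaces `g` is induced by postcomposition `p ↦ e ∘ p`, specified on
representatives as in `IsConcatMap`. -/
def IsPostcompMap {X Y : Type} [TopologicalSpace X] [Preorder X] [TopologicalSpace Y]
    [Preorder Y] {x y : X} {x' y' : Y} (e : X → Y)
    (g : TraceSpace X x y → TraceSpace Y x' y') : Prop :=
  ∀ (p : DipathSpace X x y) (q : DipathSpace Y x' y'),
    (q.1 : unitInterval → Y) = e ∘ (p.1 : unitInterval → X) → g (Quot.mk _ p) = Quot.mk _ q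

variable {X Y : Type} [TopologicalSpace X] [PartialOrder X] [TopologicalSpace Y] [PartialOrder Y]

theorem IsPostcompMap.comp_isConcatMap [OrderClosedTopology Y] {e : X → Y} (hc : Continuous e)
    (hm : Monotone e) {a b : Trace X} {u v : unitInterval → X} {u' v' : unitInterval → Y}
    (hu : IsDipath u) (hv : IsDipath v) (h : IsExtension u v a b)
    (hu' : IsDipath u') (hv' : IsDipath v') (h' : IsExtension u' v' (a.push e) (b.push e))
    {gX : TraceSpace X a.src a.tgt → TraceSpace X b.src b.tgt} (hgX : IsConcatMap u v gX)
    {gY : TraceSpace Y (a.push e).src (a.push e).tgt →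
      TraceSpace Y (b.push e).src (b.push e).tgt} (hgY : IsConcatMap u' v' gY)
    {ga : TraceSpace X a.src a.tgt → TraceSpace Y (a.push e).src (a.push e).tgt}
    (hga : IsPostcompMap e ga)
    {gb : TraceSpace X b.src b.tgt → TraceSpace Y (b.push e).src (b.push e).tgt}
    (hgb : IsPostcompMap e gb) :
    gb ∘ gX = gY ∘ ga := by
  funext z
  obtain ⟨⟨p, hpm, hp0, hp1⟩, rfl⟩ := Quot.exists_rep z
  have hp : IsDipath p := ⟨p.continuous, hpm⟩
  have hupv := h.isDipath_concatFun hu hv hp hp0 hp1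
  have hep := hp.comp hc hm
  have hep0 : e (p 0) = (a.push e).src := (congrArg e hp0).trans (a.src_push e).symm
  have hep1 : e (p 1) = (a.push e).tgt := (congrArg e hp1).trans (a.tgt_push e).symm
  have hupv0 : concatFun (concatFun u p) v 0 = b.src := by
    rw [concatFun_zero, concatFun_zero, h.apply_zero_left]
  have hupv1 : concatFun (concatFun u p) v 1 = b.tgt := by
    rw [concatFun_one, h.apply_one_right]
  let upv : DipathSpace X b.src b.tgt := ⟨⟨_, hupv.1⟩, hupv.2, hupv0, hupv1⟩
  let ep : DipathSpace Y (a.push e).src (a.push e).tgt := ⟨⟨_, hep.1⟩, hep.2, hep0, hep1⟩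
  let eupv : DipathSpace Y (b.push e).src (b.push e).tgt :=
    ⟨⟨_, (hupv.comp hc hm).1⟩, (hupv.comp hc hm).2,
      (congrArg e hupv0).trans (b.src_push e).symm, (congrArg e hupv1).trans (b.tgt_push e).symm⟩
  have hext : ReparamEquiv (eupv.1 : unitInterval → Y) (concatFun (concatFun u' ep.1) v') := by
    change ReparamEquiv (e ∘ concatFun (concatFun u p) v) _
    rw [comp_concatFun, comp_concatFun]
    exact (h.push hc hm).reparamEquiv_concatFun h' (hu.comp hc hm) (hv.comp hc hm) hu' hv'
      hep hep0 hep1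
  calc gb (gX (Quot.mk _ ⟨p, hpm, hp0, hp1⟩))
      = gb (Quot.mk _ upv) := congrArg gb (hgX _ upv (.refl _))
    _ = Quot.mk _ eupv := hgb _ _ rfl
    _ = gY (Quot.mk _ ep) := (hgY _ _ hext).symm
    _ = gY (ga (Quot.mk _ ⟨p, hpm, hp0, hp1⟩)) := (congrArg gY (hga _ ep rfl)).symm

end TraceSpace

section Bisimulation

theorem isBisimRel_graph {A B : Type*} {rA : A → A → Prop} {rB : B → B → Prop}
    {FO : A → ModuleCat ℤ} {Fm : ∀ a a', rA a a' → (FO a ⟶ FO a')}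
    {GO : B → ModuleCat ℤ} {Gm : ∀ b b', rB b b' → (GO b ⟶ GO b')}
    {π : A → B} (hπ : Function.Surjective π) (hr : ∀ a a', rB (π a) (π a') ↔ rA a a')
    {η : ∀ a, FO a ≅ GO (π a)}
    (hη : ∀ a a' (h : rA a a') (h' : rB (π a) (π a')),
      Fm a a' h ≫ (η a').hom = (η a).hom ≫ Gm (π a) (π a') h') :
    IsBisimRel rA rB FO Fm GO Gm {t | ∃ a, t = ⟨a, π a, η a⟩} := by
  refine ⟨fun a => ⟨_, ⟨a, rfl⟩, rfl⟩, fun b => ?_, ?_, ?_⟩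
  · obtain ⟨a, ha⟩ := hπ b
    exact ⟨_, ⟨a, rfl⟩, ha⟩
  · rintro _ ⟨a, rfl⟩ a' h
    refine ⟨_, ⟨a', rfl⟩, rfl, (hr a a').2 h, ?_⟩
    rw [eqToHom_refl, Category.id_comp]
    exact hη a a' h _
  · rintro _ ⟨a, rfl⟩ b' h
    obtain ⟨a', rfl⟩ := hπ b'
    refine ⟨_, ⟨a', rfl⟩, rfl, (hr a a').1 h, ?_⟩
    rw [eqToHom_refl, Category.comp_id]
    exact hη a a' _ h

variable {X Y : Type} [TopologicalSpace X] [PartialOrder X] [TopologicalSpace Y] [PartialOrder Y]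
  (F : TopCat.{0} ⥤ ModuleCat.{0} ℤ)

/-- The value at a trace of the natural system obtained by applying `F` to the trace space between
its endpoints; natural homology is the case of a singular homology functor `F`. -/
abbrev traceSystem (X : Type) [TopologicalSpace X] [PartialOrder X] (a : TPos X) : ModuleCat ℤ :=
  F.obj (TopCat.of (TraceSpace X a.1.src a.1.tgt))

/-- `Fm` is the map part of the natural system of `F`: each map is induced by concatenation with
a pair of dipaths realizing the relation of traces. -/
def IsTraceSystemMap
    (Fm : ∀ a b : TPos X, TPosLE a b → (traceSystem F X a ⟶ traceSystem F X b)) : Prop :=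
  ∀ (a b : TPos X) (h : TPosLE a b),
    ∃ (g : TopCat.of (TraceSpace X a.1.src a.1.tgt) ⟶ TopCat.of (TraceSpace X b.1.src b.1.tgt))
      (u v : unitInterval → X), IsDipath u ∧ IsDipath v ∧ IsExtension u v a.1 b.1 ∧
        IsConcatMap u v g ∧ Fm a b h = F.map g

/-- `η` consists of the isomorphisms of natural systems induced by the maps `p ↦ e ∘ p` of trace
spaces. -/
def IsPostcompIso (e : X ≃ₜ Y) (he : Monotone e)
    (η : ∀ a : TPos X, traceSystem F X a ≅ traceSystem F Y (TPos.push e he a)) : Prop :=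
  ∀ a : TPos X, ∃ g : TopCat.of (TraceSpace X a.1.src a.1.tgt) ⟶
      TopCat.of (TraceSpace Y (TPos.push e he a).1.src (TPos.push e he a).1.tgt),
    IsPostcompMap e g ∧ (η a).hom = F.map g

variable {F}

theorem IsPostcompIso.naturality [OrderClosedTopology Y] {e : X ≃ₜ Y} {he : Monotone e}
    {η : ∀ a : TPos X, traceSystem F X a ≅ traceSystem F Y (TPos.push e he a)}
    (hη : IsPostcompIso F e he η)
    {Fm : ∀ a b : TPos X, TPosLE a b → (traceSystem F X a ⟶ traceSystem F X b)}
    (hFm : IsTraceSystemMap F Fm)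
    {Gm : ∀ a b : TPos Y, TPosLE a b → (traceSystem F Y a ⟶ traceSystem F Y b)}
    (hGm : IsTraceSystemMap F Gm) (a b : TPos X) (h : TPosLE a b)
    (h' : TPosLE (TPos.push e he a) (TPos.push e he b)) :
    Fm a b h ≫ (η b).hom = (η a).hom ≫ Gm _ _ h' := by
  obtain ⟨gX, u, v, hu, hv, hext, hgX, hFmX⟩ := hFm a b h
  obtain ⟨gY, u', v', hu', hv', hext', hgY, hGmY⟩ := hGm _ _ h'
  obtain ⟨ga, hga, hηa⟩ := hη a
  obtain ⟨gb, hgb, hηb⟩ := hη b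
  have hsquare : gX ≫ gb = ga ≫ gY := TopCat.hom_ext <| ContinuousMap.ext <| congrFun <|
    IsPostcompMap.comp_isConcatMap e.continuous he hu hv hext hu' hv' hext' hgX hgY hga hgb
  rw [hFmX, hGmY, hηa, hηb, ← F.map_comp, ← F.map_comp, hsquare]

theorem natural_homologies_of_dihomeomorphic_pospaces_are_bisimilar_general
    [OrderClosedTopology Y] (F : TopCat.{0} ⥤ ModuleCat.{0} ℤ)
    (e : X ≃ₜ Y) (he : Monotone e) (he' : Monotone e.symm)
    {Fm : ∀ a b : TPos X, TPosLE a b → (traceSystem F X a ⟶ traceSystem F X b)}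
    (hFm : IsTraceSystemMap F Fm)
    {Gm : ∀ a b : TPos Y, TPosLE a b → (traceSystem F Y a ⟶ traceSystem F Y b)}
    (hGm : IsTraceSystemMap F Gm)
    {η : ∀ a : TPos X, traceSystem F X a ≅ traceSystem F Y (TPos.push e he a)}
    (hη : IsPostcompIso F e he η) :
    IsBisimRel TPosLE TPosLE (traceSystem F X) Fm (traceSystem F Y) Gm
      {t | ∃ a : TPos X, t = ⟨a, TPos.push e he a, η a⟩} :=
  isBisimRel_graph (TPos.push_surjective e he he') (tposLE_push_iff e he he')
    (hη.naturality hFm hGm)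

end Bisimulation

/-- Let `X` and `Y` be pospaces and `e : X → Y` a dihomeomorphism (a
homeomorphism which is an order isomorphism).  Then for every `n ≥ 1` the natural homology
functors `H⃗_n(X;ℤ) : tpos(X) → Ab` and `H⃗_n(Y;ℤ) : tpos(Y) → Ab` are bisimulation
equivalent: the set of triples `(⟨p⟩, H_{n-1}(e_*), ⟨e ∘ p⟩)`, where `⟨p⟩` ranges over all
traces of `X` and `H_{n-1}(e_*)` is the isomorphism induced in homology by the homeomorphism of
trace spaces `q ↦ e ∘ q`, is a bisimulation between them.  The natural homology functors are
presented by their object parts `Hobj` (defined concretely above) and their map parts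
`HmapX, HmapY`, characterized as being induced in singular homology by concatenation with the
extensions; the isomorphisms `η a` are characterized as being induced by `q ↦ e ∘ q`. -/
theorem natural_homologies_of_dihomeomorphic_pospaces_are_bisimilar
    (n : ℕ) (hn : 1 ≤ n)
    (X : Type) [TopologicalSpace X] [PartialOrder X] [T2Space X] [OrderClosedTopology X]
    (Y : Type) [TopologicalSpace Y] [PartialOrder Y] [T2Space Y] [OrderClosedTopology Y]
    -- a dihomeomorphism from X to Y
    (e : X ≃ₜ Y) (he : Monotone e) (he' : Monotone e.symm)
    -- the map part of the natural homology functor H⃗_n(X;ℤ) ...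
    (HmapX : ∀ a b : TPos X, TPosLE a b → (Hobj ℤ (n - 1) X a ⟶ Hobj ℤ (n - 1) X b))
    (HmapY : ∀ a b : TPos Y, TPosLE a b → (Hobj ℤ (n - 1) Y a ⟶ Hobj ℤ (n - 1) Y b))
    -- ... functorial ...
    (hidX : ∀ (a : TPos X) (h : TPosLE a a), HmapX a a h = 𝟙 _)
    (hcompX : ∀ (a b c : TPos X) (hab : TPosLE a b) (hbc : TPosLE b c) (hac : TPosLE a c),
      HmapX a c hac = HmapX a b hab ≫ HmapX b c hbc)
    (hidY : ∀ (a : TPos Y) (h : TPosLE a a), HmapY a a h = 𝟙 _)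
    (hcompY : ∀ (a b c : TPos Y) (hab : TPosLE a b) (hbc : TPosLE b c) (hac : TPosLE a c),
      HmapY a c hac = HmapY a b hab ≫ HmapY b c hbc)
    -- ... and induced in homology by concatenation with the extensions:
    (hindX : ∀ (a b : TPos X) (h : TPosLE a b),
      ∃ (g : TopCat.of (TraceSpace X a.1.src a.1.tgt) ⟶ TopCat.of (TraceSpace X b.1.src b.1.tgt))
        (u v : unitInterval → X), IsDipath u ∧ IsDipath v ∧
        (∃ f : unitInterval → X, IsDipath f ∧ u 1 = f 0 ∧ f 1 = v 0 ∧
          a.1 = trc f ∧ b.1 = trc (concatFun (concatFun u f) v)) ∧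
        (∀ (p : DipathSpace X a.1.src a.1.tgt) (q : DipathSpace X b.1.src b.1.tgt),
          ReparamEquiv (q.1 : unitInterval → X)
            (concatFun (concatFun u (p.1 : unitInterval → X)) v) →
          g (Quot.mk _ p) = Quot.mk _ q) ∧
        HmapX a b h = (SingularH ℤ (n - 1)).map g)
    (hindY : ∀ (a b : TPos Y) (h : TPosLE a b),
      ∃ (g : TopCat.of (TraceSpace Y a.1.src a.1.tgt) ⟶ TopCat.of (TraceSpace Y b.1.src b.1.tgt))
        (u v : unitInterval → Y), IsDipath u ∧ IsDipath v ∧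
        (∃ f : unitInterval → Y, IsDipath f ∧ u 1 = f 0 ∧ f 1 = v 0 ∧
          a.1 = trc f ∧ b.1 = trc (concatFun (concatFun u f) v)) ∧
        (∀ (p : DipathSpace Y a.1.src a.1.tgt) (q : DipathSpace Y b.1.src b.1.tgt),
          ReparamEquiv (q.1 : unitInterval → Y)
            (concatFun (concatFun u (p.1 : unitInterval → Y)) v) →
          g (Quot.mk _ p) = Quot.mk _ q) ∧
        HmapY a b h = (SingularH ℤ (n - 1)).map g)
    -- the isomorphisms induced in homology by the homeomorphisms of trace spaces `q ↦ e ∘ q`: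
    (η : ∀ a : TPos X, Hobj ℤ (n - 1) X a ≅ Hobj ℤ (n - 1) Y (TPos.push e he a))
    (hη : ∀ a : TPos X,
      ∃ g : TopCat.of (TraceSpace X a.1.src a.1.tgt) ⟶
          TopCat.of (TraceSpace Y (TPos.push e he a).1.src (TPos.push e he a).1.tgt),
        (∀ (p : DipathSpace X a.1.src a.1.tgt)
           (q : DipathSpace Y (TPos.push e he a).1.src (TPos.push e he a).1.tgt),
          (q.1 : unitInterval → Y) = (e : X → Y) ∘ (p.1 : unitInterval → X) →
          g (Quot.mk _ p) = Quot.mk _ q) ∧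
        (η a).hom = (SingularH ℤ (n - 1)).map g) :
    -- conclusion: the set of triples `(a, η a, e_*(a))` is a bisimulation between the
    -- natural homology functors of X and Y
    IsBisimRel TPosLE TPosLE (Hobj ℤ (n - 1) X) HmapX (Hobj ℤ (n - 1) Y) HmapY
      {t | ∃ a : TPos X, t = ⟨a, TPos.push e he a, η a⟩} := by
  exact natural_homologies_of_dihomeomorphic_pospaces_are_bisimilar_general (SingularH ℤ (n - 1))
    e he he' hindX hindY hη

end
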